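/- Let X be a nonempty Polish space (separable and completely metrizable) equipped with its Borel σ-algebra, and let μ be a σ-finite Borel measure on X with μ({x}) = 0 for every x ∈ X and μ(X) = ∞. Then there exists a Borel isomorphism f : X → ℝ (a bijection such that both f and f⁻¹ are Borel measurable) such that μ(f⁻¹(B)) equals the Lebesgue measure of B for every Borel set B ⊆ ℝ. -/

import Mathlib

open MeasureTheory

noncomputable section

/-!
A σ-finite measure `μ` without atoms becomes a measure `ν` on `ℝ` whose left half-lines have finite
mass, once `X` is embedded in the line with the `n`-th piece of a partition into sets of finite
measure placed inside `(n, n + 1)`. The distribution function of `ν` is then continuous and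
monotone, so it pushes `ν` forward to Lebesgue measure on `[0, μ X]`, and it is injective outside
the preimage of the countable set of values it takes at rational points, which is null.
A map which is injective on a conull set agrees almost everywhere with a Borel isomorphism: discard
in addition an uncountable null set on either side, and match the uncountable leftovers by an
arbitrary Borel isomorphism. Hence `μ` is isomorphic to Lebesgue measure on `[0, μ X]`, and two such
measures of equal total mass are isomorphic to each other.
-/

open Set Filter Topology
open scoped ENNReal

section BorelIsomorphism

variable {X Y : Type*} [MeasurableSpace X] [MeasurableSpace Y]

theorem uncountable_of_measure_ne_zero (μ : Measure X) [NullSingletonClass μ] (hμ : μ ≠ 0) :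
    Uncountable X := by
  refine not_countable_iff.1 fun _ => hμ ?_
  exact Measure.measure_univ_eq_zero.1 (countable_univ.measure_zero μ)

variable [StandardBorelSpace X] [StandardBorelSpace Y]

theorem exists_measurableSet_measure_eq_zero_not_countable [Uncountable X]
    (μ : Measure X) [SFinite μ] :
    ∃ M : Set X, MeasurableSet M ∧ μ M = 0 ∧ ¬ M.Countable := by
  -- In the model `ℝ × ℝ` all vertical lines but countably many are null.
  let e : X ≃ᵐ ℝ × ℝ := PolishSpace.measurableEquivOfNotCountable not_countable not_countable
  have hfst : Measurable fun x => (e x).1 := e.measurable.fst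
  have hpos : {r : ℝ | 0 < μ {x | (e x).1 = r}}.Countable :=
    Measure.countable_meas_level_set_pos hfst
  obtain ⟨r, hr⟩ : ∃ r : ℝ, μ {x | (e x).1 = r} = 0 := by
    by_contra! hne
    exact not_countable_univ (hpos.mono fun r _ => pos_iff_ne_zero.2 (hne r))
  refine ⟨_, hfst (measurableSet_singleton r), hr, fun hline => ?_⟩
  have hinj : Function.Injective fun y : ℝ => e.symm (r, y) := fun y z h => by simpa using h
  refine not_countable_univ ((hline.preimage hinj).mono fun y _ => ?_)
  simp

theorem exists_measurableEquiv_eqOn {s : Set X} (hs : MeasurableSet s) {g : X → Y}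
    (hg : Measurable g) (hinj : InjOn g s) (hsc : ¬ sᶜ.Countable) (hgsc : ¬ (g '' s)ᶜ.Countable) :
    ∃ e : X ≃ᵐ Y, EqOn e g s := by
  classical
  rw [← range_domRestrict] at hgsc
  have := hs.standardBorel
  have hemb : MeasurableEmbedding (s.domRestrict g) :=
    (hg.comp measurable_subtype_coe).measurableEmbedding (injOn_iff_injective.1 hinj)
  have hrange : MeasurableSet (range (s.domRestrict g)) := hemb.measurableSet_range
  have := hs.compl.standardBorel
  have := hrange.compl.standardBorel
  let e' : ↥sᶜ ≃ᵐ ↥(range (s.domRestrict g))ᶜ := PolishSpace.measurableEquivOfNotCountable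
    (mt countable_coe_iff.1 hsc) (mt countable_coe_iff.1 hgsc)
  refine ⟨(MeasurableEquiv.sumCompl hs).symm.trans
    ((hemb.equivRange.sumCongr e').trans (MeasurableEquiv.sumCompl hrange)), fun x hx => ?_⟩
  have hinl : (MeasurableEquiv.sumCompl hs).symm x = Sum.inl ⟨x, hx⟩ :=
    Equiv.sumCompl_symm_apply_of_pos hx
  rw [MeasurableEquiv.trans_apply, hinl]
  exact congrArg Subtype.val (hemb.equivRange_apply ⟨x, hx⟩)

theorem exists_measurableEquiv_ae_eq [Uncountable X] [Uncountable Y] {μ : Measure X} [SFinite μ]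
    {g : X → Y} (hg : Measurable g) {s : Set X} (hs : s ∈ ae μ) (hinj : InjOn g s) :
    ∃ e : X ≃ᵐ Y, e =ᵐ[μ] g := by
  obtain ⟨M, hM, hM0, hMc⟩ := exists_measurableSet_measure_eq_zero_not_countable μ
  obtain ⟨P, hP, hP0, hPc⟩ := exists_measurableSet_measure_eq_zero_not_countable (μ.map g)
  obtain ⟨t, ht, htm, hts⟩ := IsMeasurablyGenerated.exists_measurable_subset hs
  rw [Measure.map_apply hg hP] at hP0
  let u : Set X := t \ (M ∪ g ⁻¹' P)
  have hu : u ∈ ae μ := inter_mem ht (compl_mem_ae_iff.2 (measure_union_null hM0 hP0))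
  have hMu : M ⊆ uᶜ := fun x hxM hxu => hxu.2 (Or.inl hxM)
  have hPu : P ⊆ (g '' u)ᶜ := by
    rintro _ hxP ⟨x, hxu, rfl⟩
    exact hxu.2 (Or.inr hxP)
  obtain ⟨e, he⟩ := exists_measurableEquiv_eqOn (htm.diff (hM.union (hg hP))) hg
    (hinj.mono (sdiff_subset.trans hts)) (mt (Countable.mono hMu) hMc)
    (mt (Countable.mono hPu) hPc)
  exact ⟨e, he.eventuallyEq_of_mem hu⟩

end BorelIsomorphism

theorem injOn_compl_preimage_image_of_monotone_of_dense {α β : Type*} [LinearOrder α]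
    [TopologicalSpace α] [OrderClosedTopology α] [DenselyOrdered α] [PartialOrder β] {f : α → β}
    (hf : Monotone f) {D : Set α} (hD : Dense D) : InjOn f (f ⁻¹' (f '' D))ᶜ := by
  have hlt : ∀ x y, f x = f y → x < y → f x ∈ f '' D := fun x y hxy h => by
    obtain ⟨d, hd, hxd, hdy⟩ := hD.exists_between h
    exact ⟨d, hd, le_antisymm (hxy ▸ hf hdy.le) (hf hxd.le)⟩
  intro x hx y hy hxy
  rcases lt_trichotomy x y with h | h | h
  · exact absurd (hlt x y hxy h) hx
  · exact h
  · exact absurd (hlt y x hxy.symm h) hy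

theorem exists_preimage_Iic_eq_Iic_of_monotone_of_continuous {α β : Type*}
    [ConditionallyCompleteLinearOrder α] [TopologicalSpace α] [OrderTopology α] [DenselyOrdered α]
    [LinearOrder β] [TopologicalSpace β] [OrderClosedTopology β] {f : α → β}
    (hmono : Monotone f) (hcont : Continuous f) {t : β} (hle : ∃ x, f x ≤ t) (hlt : ∃ y, t < f y) :
    ∃ a, f ⁻¹' Iic t = Iic a ∧ f a = t := by
  obtain ⟨y, hy⟩ := hlt
  have hbdd : BddAbove (f ⁻¹' Iic t) :=
    ⟨y, fun x hx => (hmono.reflect_lt (lt_of_le_of_lt hx hy)).le⟩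
  have hmem : sSup (f ⁻¹' Iic t) ∈ f ⁻¹' Iic t := (isClosed_Iic.preimage hcont).csSup_mem hle hbdd
  obtain ⟨z, hz⟩ : t ∈ range f := mem_range_of_exists_le_of_exists_ge hcont hle ⟨y, hy.le⟩
  have hzS : z ∈ f ⁻¹' Iic t := hz.le
  refine ⟨sSup (f ⁻¹' Iic t), Subset.antisymm (fun x hx => le_csSup hbdd hx) fun x hx =>
    (hmono hx).trans hmem, le_antisymm hmem ?_⟩
  exact hz.ge.trans (hmono (le_csSup hbdd hzS))

theorem measure_ext_of_Iic_of_ne_top {α : Type*} [TopologicalSpace α] [MeasurableSpace α]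
    [SecondCountableTopology α] [LinearOrder α] [OrderTopology α] [BorelSpace α] [NoMinOrder α]
    {μ ν : Measure α} (hfin : ∀ a, μ (Iic a) ≠ ∞)
    (h : ∀ a, μ (Iic a) = ν (Iic a)) : μ = ν := by
  refine Measure.ext_of_Ioc' μ ν
    (fun a b _ => measure_ne_top_of_subset Ioc_subset_Iic_self (hfin b)) fun a b hab => ?_
  rw [← Iic_sdiff_Iic, measure_sdiff (Iic_subset_Iic.2 hab.le) nullMeasurableSet_Iic (hfin a),
    measure_sdiff (Iic_subset_Iic.2 hab.le) nullMeasurableSet_Iic (h a ▸ hfin a), h a, h b]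

/-- The interval `[0, m]` of the real line, read as `[0, ∞)` for `m = ∞`: Lebesgue measure on it is
the model of an atomless measure of total mass `m`. -/
def massInterval (m : ℝ≥0∞) : Set ℝ := {t | 0 ≤ t ∧ ENNReal.ofReal t ≤ m}

theorem volume_restrict_massInterval_Iic (m : ℝ≥0∞) (t : ℝ) :
    volume.restrict (massInterval m) (Iic t) = min (ENNReal.ofReal t) m := by
  rw [Measure.restrict_apply measurableSet_Iic]
  induction m with
  | top =>
    have hinter : Iic t ∩ massInterval ∞ = Icc 0 t := by
      ext x
      simp [massInterval, and_comm]
    rw [hinter, Real.volume_Icc, sub_zero, min_eq_left le_top]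
  | coe r =>
    have hinter : Iic t ∩ massInterval r = Icc 0 (min t r) := by
      ext x
      simp only [massInterval, mem_inter_iff, mem_Iic, mem_ofPred_eq, mem_Icc, le_min_iff,
        ENNReal.ofReal_le_coe]
      tauto
    rw [hinter, Real.volume_Icc, sub_zero, ENNReal.ofReal_min, ENNReal.ofReal_coe_nnreal]

/-- The distribution function `x ↦ ν (-∞, x]` of a measure on the line. It is intended for measures
giving finite mass to left half-lines: an infinite mass is read as `0`. -/
def distributionFunction (ν : Measure ℝ) (x : ℝ) : ℝ := ν.real (Iic x)

section DistributionFunction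

variable {ν : Measure ℝ}

theorem ofReal_distributionFunction {x : ℝ} (hx : ν (Iic x) ≠ ∞) :
    ENNReal.ofReal (distributionFunction ν x) = ν (Iic x) :=
  ofReal_measureReal hx

theorem monotone_distributionFunction (hfin : ∀ x, ν (Iic x) ≠ ∞) :
    Monotone (distributionFunction ν) := fun _ y hxy =>
  measureReal_mono (Iic_subset_Iic.2 hxy) (hfin y)

theorem tendsto_distributionFunction_atBot (hfin : ∀ x, ν (Iic x) ≠ ∞) :
    Tendsto (distributionFunction ν) atBot (𝓝 0) := by
  have h : Tendsto (fun x => ν (Iic x)) atBot (𝓝 (ν (⋂ x, Iic x))) :=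
    tendsto_measure_iInter_atBot (fun _ => nullMeasurableSet_Iic) (fun _ _ => Iic_subset_Iic.2)
      ⟨0, hfin 0⟩
  rw [iInter_Iic_eq_empty_iff.2 (by simp [not_bddBelow_univ]), measure_empty] at h
  exact (ENNReal.tendsto_toReal ENNReal.zero_ne_top).comp h

variable [NullSingletonClass ν]

theorem continuous_distributionFunction (hfin : ∀ x, ν (Iic x) ≠ ∞) :
    Continuous (distributionFunction ν) := by
  have hint : ∀ x, IntegrableOn (fun _ => (1 : ℝ)) (Iic x) ν := fun x =>
    integrableOn_const (hfin x)
  have hprim : Continuous fun x => ∫ _ in (0 : ℝ)..x, (1 : ℝ) ∂ν :=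
    intervalIntegral.continuous_primitive
      (fun a b => ((hint (max a b)).mono_set Icc_subset_Iic_self).intervalIntegrable) 0
  have heq : distributionFunction ν =
      fun x => (∫ _ in (0 : ℝ)..x, (1 : ℝ) ∂ν) + distributionFunction ν 0 := by
    ext x
    rw [← intervalIntegral.integral_Iic_sub_Iic (hint 0) (hint x)]
    simp [distributionFunction]
  exact heq ▸ hprim.add continuous_const

theorem measure_distributionFunction_preimage_Iic (hfin : ∀ x, ν (Iic x) ≠ ∞) (t : ℝ) :
    ν (distributionFunction ν ⁻¹' Iic t) = min (ENNReal.ofReal t) (ν univ) := by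
  by_cases hle : ∃ x, distributionFunction ν x ≤ t
  · by_cases hlt : ∃ y, t < distributionFunction ν y
    · obtain ⟨a, ha, hat⟩ := exists_preimage_Iic_eq_Iic_of_monotone_of_continuous
        (monotone_distributionFunction hfin) (continuous_distributionFunction hfin) hle hlt
      have hν : ν (Iic a) = ENNReal.ofReal t := by rw [← hat, ofReal_distributionFunction (hfin a)]
      rw [ha, hν, min_eq_left (hν ▸ measure_mono (subset_univ _))]
    · push Not at hlt
      have huniv : ν univ ≤ ENNReal.ofReal t :=
        le_of_tendsto' (tendsto_measure_Iic_atTop ν) fun x =>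
          ofReal_distributionFunction (hfin x) ▸ ENNReal.ofReal_le_ofReal (hlt x)
      have hpre : distributionFunction ν ⁻¹' Iic t = univ := eq_univ_of_forall hlt
      rw [hpre, min_eq_right huniv]
  · push Not at hle
    have ht : t ≤ 0 :=
      ge_of_tendsto' (tendsto_distributionFunction_atBot hfin) fun x => (hle x).le
    have hpre : distributionFunction ν ⁻¹' Iic t = ∅ :=
      eq_empty_of_forall_notMem fun x => (hle x).not_ge
    rw [hpre, measure_empty, ENNReal.ofReal_of_nonpos ht, min_eq_left zero_le]

theorem map_distributionFunction (hfin : ∀ x, ν (Iic x) ≠ ∞) :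
    ν.map (distributionFunction ν) = volume.restrict (massInterval (ν univ)) := by
  refine (measure_ext_of_Iic_of_ne_top (fun t => ?_) fun t => ?_).symm
  · rw [volume_restrict_massInterval_Iic]
    exact ne_top_of_le_ne_top ENNReal.ofReal_ne_top (min_le_left _ _)
  · rw [volume_restrict_massInterval_Iic,
      Measure.map_apply (continuous_distributionFunction hfin).measurable measurableSet_Iic,
      measure_distributionFunction_preimage_Iic hfin]

end DistributionFunction

section Isomorphism

variable {X Y : Type*} [MeasurableSpace X] [StandardBorelSpace X]
  [MeasurableSpace Y] [StandardBorelSpace Y]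

theorem exists_measurableEmbedding_real_measure_preimage_Iic_ne_top
    (μ : Measure X) [SigmaFinite μ] :
    ∃ φ : X → ℝ, MeasurableEmbedding φ ∧ ∀ x, μ (φ ⁻¹' Iic x) ≠ ∞ := by
  let n : X → ℕ := spanningSetsIndex μ
  let σ : X → ℝ := fun x => Real.sigmoid (embeddingReal X x)
  have hσ : Measurable σ := continuous_sigmoid.measurable.comp (measurable_embeddingReal X)
  have hfloor : ∀ x, ⌊(n x : ℝ) + σ x⌋₊ = n x := fun x =>
    (Nat.floor_eq_iff (add_nonneg (Nat.cast_nonneg _) (Real.sigmoid_nonneg _))).2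
      ⟨le_add_of_nonneg_right (Real.sigmoid_nonneg _),
        add_lt_add_right (Real.sigmoid_lt_one _) _⟩
  have hinj : Function.Injective fun x => (n x : ℝ) + σ x := fun x y hxy => by
    have hn : n x = n y := hfloor x ▸ hfloor y ▸ congrArg Nat.floor hxy
    refine (measurableEmbedding_embeddingReal X).injective (Real.sigmoid_injective ?_)
    simpa only [hn, add_right_inj] using hxy
  have hmeas : Measurable fun x => (n x : ℝ) + σ x :=
    (measurable_from_top.comp (measurableSet_spanningSetsIndex μ)).add hσ
  refine ⟨_, hmeas.measurableEmbedding hinj, fun x => ?_⟩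
  refine measure_ne_top_of_subset (fun y hy => ?_) (measure_spanningSets_lt_top μ ⌊x⌋₊).ne
  exact mem_spanningSets_of_index_le μ y ((hfloor y).symm.trans_le (Nat.floor_le_floor hy))

theorem exists_injOn_map_eq_volume_restrict_massInterval
    (μ : Measure X) [SigmaFinite μ] [NullSingletonClass μ] :
    ∃ g : X → ℝ, Measurable g ∧ (∃ s ∈ ae μ, InjOn g s) ∧
      μ.map g = volume.restrict (massInterval (μ univ)) := by
  obtain ⟨φ, hφ, hφfin⟩ := exists_measurableEmbedding_real_measure_preimage_Iic_ne_top μ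
  have : NullSingletonClass (μ.map φ) := ⟨fun y => by
    rw [hφ.map_apply]
    exact (subsingleton_singleton.preimage hφ.injective).measure_zero μ⟩
  have hfin : ∀ x, μ.map φ (Iic x) ≠ ∞ := fun x => by
    rw [hφ.map_apply]
    exact hφfin x
  set F : ℝ → ℝ := distributionFunction (μ.map φ)
  have hF : Measurable F := (continuous_distributionFunction hfin).measurable
  have hg : Measurable (F ∘ φ) := hF.comp hφ.measurable
  have hmap : μ.map (F ∘ φ) = volume.restrict (massInterval (μ univ)) := by
    rw [← Measure.map_map hF hφ.measurable, map_distributionFunction hfin, hφ.map_apply,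
      preimage_univ]
  have hcount : (F '' range ((↑) : ℚ → ℝ)).Countable := (countable_range _).image F
  refine ⟨F ∘ φ, hg, ⟨((F ∘ φ) ⁻¹' (F '' range ((↑) : ℚ → ℝ)))ᶜ, ?_, ?_⟩, hmap⟩
  · rw [compl_mem_ae_iff, ← Measure.map_apply hg hcount.measurableSet, hmap]
    exact hcount.measure_zero _
  · have hFinj := injOn_compl_preimage_image_of_monotone_of_dense
      (monotone_distributionFunction hfin) Rat.denseRange_cast
    exact hFinj.comp hφ.injective.injOn fun x hx => hx

theorem exists_measurePreserving_volume_restrict_massInterval [Uncountable X]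
    (μ : Measure X) [SigmaFinite μ] [NullSingletonClass μ] :
    ∃ e : X ≃ᵐ ℝ, MeasurePreserving e μ (volume.restrict (massInterval (μ univ))) := by
  obtain ⟨g, hg, ⟨s, hs, hinj⟩, hmap⟩ := exists_injOn_map_eq_volume_restrict_massInterval μ
  obtain ⟨e, he⟩ := exists_measurableEquiv_ae_eq hg hs hinj
  exact ⟨e, e.measurable, (Measure.map_congr he).trans hmap⟩

theorem stmt19_general [Uncountable X] [Uncountable Y]
    (μ : Measure X) [SigmaFinite μ] [NullSingletonClass μ]
    (ν : Measure Y) [SigmaFinite ν] [NullSingletonClass ν] (hmass : μ univ = ν univ) :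
    ∃ e : X ≃ᵐ Y, MeasurePreserving e μ ν := by
  obtain ⟨e, he⟩ := exists_measurePreserving_volume_restrict_massInterval μ
  obtain ⟨e', he'⟩ := exists_measurePreserving_volume_restrict_massInterval ν
  rw [hmass] at he
  exact ⟨e.trans e'.symm, (he'.symm e').comp he⟩

end Isomorphism

theorem stmt19 (X : Type*) [TopologicalSpace X] [PolishSpace X]
    [MeasurableSpace X] [BorelSpace X] [Nonempty X]
    (μ : Measure X) [SigmaFinite μ]
    (hfree : ∀ x : X, μ {x} = 0) (hinf : μ Set.univ = ⊤) :
    ∃ e : X ≃ᵐ ℝ,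
      ∀ B : Set ℝ, MeasurableSet B → μ (e ⁻¹' B) = volume B := by
  have : NullSingletonClass μ := ⟨hfree⟩
  have : Uncountable X := uncountable_of_measure_ne_zero μ (by rintro rfl; simp at hinf)
  obtain ⟨e, he⟩ := stmt19_general μ volume (hinf.trans Real.volume_univ.symm)
  exact ⟨e, fun B hB => he.measure_preimage hB.nullMeasurableSet⟩
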